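/- arXiv:2306.10446 — 2 statements merged into one kernel-verified Lean document; each statement's English description precedes it below -/
import Mathlib

section
/- Let F be a finite field and d ≥ 1 a natural number. Let A₁, …, A_m be pairwise non-isomorphic étale F-algebras of dimension d such that every étale F-algebra of dimension d is isomorphic to some A_i (a complete irredundant list of representatives exists and is finite). Then Σ_{i=1}^m 1 / #Aut_{F-alg}(A_i) = 1. -/
/-!
For a finite Galois extension `K / F` with group `G`, the algebras of dimension `d` split by `K`
correspond to the `G`-sets with `d` elements: `A` goes to its set of points `A →ₐ[F] K`, and a
`G`-set `X` goes to the algebra of `G`-equivariant functions `X → K`. For a split algebra `A`, an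
action of `G` on a fixed set `X` of `d` elements together with an isomorphism of `A` with the
equivariant functions amounts to a labelling of the points of `A` by `X`, so there are `d!` such
pairs. Grouping the actions by the isomorphism class of their equivariant functions gives
`∑ 1 / #Aut A = #Hom(G, S_d) / d!`. A finite field has an extension `K` of degree `d!`; it splits
every reduced algebra of dimension `d`, and its Galois group is cyclic of order `d!`, so that
`#Hom(G, S_d) = #S_d = d!`.
-/

open Module IsGalois
open scoped Nat

universe u v w

namespace EtaleMassFormula

section EquivariantFunctions

variable {F K X : Type*} [Field F] [Field K] [Algebra F K]

/-- The `F`-algebra of functions `f : X → K` that are equivariant for the action of `Gal(K/F)` on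
`X` given by `ρ`. Actions are encoded as homomorphisms to `Equiv.Perm X`, so that the actions on
`X` form a type that can be counted. -/
def equivariantFunctions (ρ : Gal(K/F) →* Equiv.Perm X) : Subalgebra F (X → K) where
  carrier := {f | ∀ g x, f (ρ g x) = g (f x)}
  mul_mem' ha hb g x := by simp [ha g x, hb g x]
  add_mem' ha hb g x := by simp [ha g x, hb g x]
  algebraMap_mem' r g x := by simp

/-- Evaluation at a point, as a `K`-valued point of the algebra of equivariant functions. -/
def evalPoint (ρ : Gal(K/F) →* Equiv.Perm X) (x : X) : equivariantFunctions ρ →ₐ[F] K :=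
  (Pi.evalAlgHom F (fun _ : X => K) x).comp (equivariantFunctions ρ).val

@[simp]
lemma evalPoint_apply (ρ : Gal(K/F) →* Equiv.Perm X) (x : X) (f : equivariantFunctions ρ) :
    evalPoint ρ x f = (f : X → K) x :=
  rfl

variable [FiniteDimensional F K] [IsGalois F K] (ρ : Gal(K/F) →* Equiv.Perm X)

lemma apply_normalBasis (g h : Gal(K/F)) :
    g (normalBasis F K h) = normalBasis F K (g * h) := by
  rw [normalBasis_apply h, normalBasis_apply (g * h), AlgEquiv.mul_apply]

lemma normalBasis_repr_inv_apply (g : Gal(K/F)) (a : K) :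
    (normalBasis F K).repr (g⁻¹ a) 1 = (normalBasis F K).repr a g := by
  classical
  have hmap : Finsupp.lapply 1 ∘ₗ (normalBasis F K).repr.toLinearMap ∘ₗ
      (g⁻¹ : Gal(K/F)).toLinearMap = Finsupp.lapply g ∘ₗ (normalBasis F K).repr.toLinearMap := by
    refine (normalBasis F K).ext fun h => ?_
    simp [apply_normalBasis, Finsupp.single_apply, inv_mul_eq_one, eq_comm]
  exact LinearMap.congr_fun hmap a

lemma sum_smul_normalBasis_mem_equivariantFunctions (u : X → F) :
    (fun x => ∑ g, u (ρ g⁻¹ x) • normalBasis F K g) ∈ equivariantFunctions ρ := by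
  intro h x
  simp only [map_sum, map_smul, apply_normalBasis]
  rw [← Equiv.sum_comp (Equiv.mulLeft h)]
  simp

/-- An equivariant function is determined by the coordinates of its values at a single vector of a
normal basis, and these coordinates are arbitrary. -/
noncomputable def equivariantFunctionsEquivFun : equivariantFunctions ρ ≃ₗ[F] (X → F) where
  toFun f x := (normalBasis F K).repr ((f : X → K) x) 1
  map_add' f f' := by ext x; simp
  map_smul' c f := by ext x; simp
  invFun u := ⟨_, sum_smul_normalBasis_mem_equivariantFunctions ρ u⟩
  left_inv f := by
    ext x
    simp only [f.2 _ x, normalBasis_repr_inv_apply, (normalBasis F K).sum_repr]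
  right_inv u := by
    classical
    ext x
    simp [Finsupp.single_apply, Equiv.Perm.one_def]

lemma finrank_equivariantFunctions [Finite X] :
    finrank F (equivariantFunctions ρ) = Nat.card X := by
  have := Fintype.ofFinite X
  rw [(equivariantFunctionsEquivFun ρ).finrank_eq, finrank_fintype_fun_eq_card,
    Nat.card_eq_fintype_card]

instance [Finite X] : FiniteDimensional F (equivariantFunctions ρ) :=
  .equiv (equivariantFunctionsEquivFun ρ).symm

lemma evalPoint_injective : Function.Injective (evalPoint ρ) := by
  classical
  intro x y hxy
  let f := (equivariantFunctionsEquivFun ρ).symm (Pi.single x 1)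
  have hf : equivariantFunctionsEquivFun ρ f x = equivariantFunctionsEquivFun ρ f y :=
    congrArg (fun a => (normalBasis F K).repr a 1) (DFunLike.congr_fun hxy f)
  by_contra hne
  simp [f, Ne.symm hne] at hf

end EquivariantFunctions

section SplitAlgebras

/-- An `F`-algebra `A` of finite dimension is split by `K` if it has as many `K`-valued points as
its dimension allows. For finite-dimensional `A` this says that `K ⊗[F] A` is a power of `K`. -/
def IsSplitBy (F K A : Type*) [Field F] [Field K] [Algebra F K] [CommRing A] [Algebra F A] : Prop :=
  Nat.card (A →ₐ[F] K) = finrank F A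

variable {F K A X : Type*} [Field F] [Field K] [Algebra F K] [CommRing A] [Algebra F A]

lemma IsSplitBy.eq_zero_of_forall_algHom_apply_eq_zero [FiniteDimensional F A]
    (hA : IsSplitBy F K A) {a : A} (ha : ∀ f : A →ₐ[F] K, f a = 0) : a = 0 := by
  have := Fintype.ofFinite (A →ₐ[F] K)
  have hspan := (linearIndependent_algHom_toLinearMap F A K).span_eq_top_of_card_eq_finrank'
    (by rw [← Nat.card_eq_fintype_card, hA, finrank_linearMap_self])
  have hdual (l : A →ₗ[F] K) : l a = 0 := by
    induction (hspan ▸ Submodule.mem_top : l ∈ Submodule.span K _) using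
      Submodule.span_induction with
    | mem l hl => obtain ⟨f, rfl⟩ := hl; exact ha f
    | zero => rfl
    | add l l' _ _ hl hl' => simp [hl, hl']
    | smul c l _ hl => simp [hl]
  refine (forall_dual_apply_eq_zero_iff F a).1 fun l => (algebraMap F K).injective ?_
  simpa using hdual ((Algebra.linearMap F K).comp l)

lemma IsSplitBy.isReduced [FiniteDimensional F A] (hA : IsSplitBy F K A) : IsReduced A where
  eq_zero _ ha := hA.eq_zero_of_forall_algHom_apply_eq_zero fun f => (ha.map f).eq_zero

lemma isSplitBy_equivariantFunctions [FiniteDimensional F K] [IsGalois F K] [Finite X]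
    (ρ : Gal(K/F) →* Equiv.Perm X) : IsSplitBy F K (equivariantFunctions ρ) := by
  refine le_antisymm (card_algHom_le_finrank F _ K) ?_
  rw [finrank_equivariantFunctions]
  exact Nat.card_le_card_of_injective _ (evalPoint_injective ρ)

end SplitAlgebras

section Labellings

variable {F K A X : Type*} [Field F] [Field K] [Algebra F K] [CommRing A] [Algebra F A]

/-- The action of `Gal(K/F)` on the `K`-valued points of `A`, transported along a labelling `e` of
the points by `X`. -/
def actionOfLabelling (e : X ≃ (A →ₐ[F] K)) : Gal(K/F) →* Equiv.Perm X where
  toFun g := (e.trans (AlgEquiv.refl.arrowCongr g)).trans e.symm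
  map_one' := Equiv.ext fun x => e.symm_apply_apply x
  map_mul' g h := Equiv.ext fun x => congrArg e.symm <| by
    simp only [Equiv.trans_apply, Equiv.apply_symm_apply]
    rfl

lemma apply_actionOfLabelling (e : X ≃ (A →ₐ[F] K)) (g : Gal(K/F)) (x : X) :
    e (actionOfLabelling e g x) = (g : K →ₐ[F] K).comp (e x) := by
  simp [actionOfLabelling]

/-- The Gelfand transform of `A`: an element of `A` seen as a function on the labelled points. -/
def gelfandTransform (e : X ≃ (A →ₐ[F] K)) : A →ₐ[F] equivariantFunctions (actionOfLabelling e) :=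
  (AlgHom.pi fun x => e x).codRestrict _ fun a g x =>
    DFunLike.congr_fun (apply_actionOfLabelling e g x) a

/-- The labelling of `K`-valued points of `A` by `X` that comes from an identification of `A` with
the equivariant functions for some action on `X`: the label `x` goes to evaluation at `x`. -/
def labelling [FiniteDimensional F K] [IsGalois F K]
    (ψ : Σ ρ : Gal(K/F) →* Equiv.Perm X, A ≃ₐ[F] equivariantFunctions ρ) : X ↪ (A →ₐ[F] K) where
  toFun x := (evalPoint ψ.1 x).comp (ψ.2 : A →ₐ[F] equivariantFunctions ψ.1)
  inj' x y hxy := evalPoint_injective ψ.1 <| AlgHom.ext fun f => by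
    simpa using DFunLike.congr_fun hxy (ψ.2.symm f)

variable [FiniteDimensional F K] [IsGalois F K]

lemma labelling_perm_apply
    (ψ : Σ ρ : Gal(K/F) →* Equiv.Perm X, A ≃ₐ[F] equivariantFunctions ρ) (g : Gal(K/F)) (x : X) :
    labelling ψ (ψ.1 g x) = (g : K →ₐ[F] K).comp (labelling ψ x) :=
  AlgHom.ext fun a => (ψ.2 a).2 g x

lemma labelling_injective : Function.Injective (labelling : _ → X ↪ (A →ₐ[F] K)) := by
  rintro ⟨ρ, ψ⟩ ⟨τ, χ⟩ h
  obtain rfl : ρ = τ := by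
    ext g x
    apply (labelling ⟨ρ, ψ⟩).injective
    rw [labelling_perm_apply ⟨ρ, ψ⟩, h, labelling_perm_apply ⟨τ, χ⟩]
  congr 1
  ext a x
  exact DFunLike.congr_fun (DFunLike.congr_fun h x) a

variable [FiniteDimensional F A]

lemma gelfandTransform_bijective (hA : IsSplitBy F K A) (e : X ≃ (A →ₐ[F] K)) :
    Function.Bijective (gelfandTransform e) := by
  have : Finite X := .of_equiv _ e.symm
  have hinj : Function.Injective (gelfandTransform e) := by
    refine (injective_iff_map_eq_zero _).2 fun a ha =>
      hA.eq_zero_of_forall_algHom_apply_eq_zero fun f => ?_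
    obtain ⟨x, rfl⟩ := e.surjective f
    exact congrFun (congrArg Subtype.val ha) x
  refine ⟨hinj, (LinearMap.injective_iff_surjective_of_finrank_eq_finrank
    (f := (gelfandTransform e).toLinearMap) ?_).1 hinj⟩
  rw [finrank_equivariantFunctions, Nat.card_congr e, hA]

lemma labelling_surjective [Finite X] (hA : IsSplitBy F K A) (hX : finrank F A = Nat.card X) :
    Function.Surjective (labelling : _ → X ↪ (A →ₐ[F] K)) := by
  intro ε
  have hε : Function.Bijective ε := ε.injective.bijective_of_nat_card_le (hA.trans hX).le
  let e := Equiv.ofBijective ε hε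
  exact ⟨⟨actionOfLabelling e, AlgEquiv.ofBijective _ (gelfandTransform_bijective hA e)⟩, rfl⟩

lemma natCard_sigma_algEquiv_equivariantFunctions [Finite X]
    (hA : IsSplitBy F K A) (hX : finrank F A = Nat.card X) :
    Nat.card (Σ ρ : Gal(K/F) →* Equiv.Perm X, A ≃ₐ[F] equivariantFunctions ρ) =
      (Nat.card X)! := by
  have := Fintype.ofFinite X
  have := Fintype.ofFinite (A →ₐ[F] K)
  rw [Nat.card_congr (.ofBijective _ ⟨labelling_injective, labelling_surjective hA hX⟩),
    Nat.card_eq_fintype_card, Fintype.card_embedding_eq, ← Nat.card_eq_fintype_card,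
    ← Nat.card_eq_fintype_card, hA, hX, Nat.descFactorial_self]

instance finite_algEquiv_equivariantFunctions [Finite X] (ρ : Gal(K/F) →* Equiv.Perm X) :
    Finite (A ≃ₐ[F] equivariantFunctions ρ) :=
  .of_injective (fun ψ => labelling ⟨ρ, ψ⟩) fun _ _ h =>
    eq_of_heq (Sigma.mk.inj (labelling_injective h)).2

end Labellings

section IsomorphismClasses

variable {F B J : Type*} [CommSemiring F] [CommSemiring B] [Algebra F B] [Fintype J]
  {A : J → Type*} [∀ j, CommSemiring (A j)] [∀ j, Algebra F (A j)]

lemma sum_natCard_algEquiv_div_natCard_aut [∀ j, Finite (A j ≃ₐ[F] B)]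
    (hirr : ∀ i j, Nonempty (A i ≃ₐ[F] A j) → i = j) (hB : ∃ j, Nonempty (B ≃ₐ[F] A j)) :
    ∑ j, (Nat.card (A j ≃ₐ[F] B) : ℚ) / Nat.card (A j ≃ₐ[F] A j) = 1 := by
  obtain ⟨i, ⟨e⟩⟩ := hB
  have hother (j : J) (hj : j ≠ i) : Nat.card (A j ≃ₐ[F] B) = 0 :=
    have : IsEmpty (A j ≃ₐ[F] B) := ⟨fun f => hj (hirr _ _ ⟨f.trans e⟩)⟩
    Nat.card_of_isEmpty
  have hself : Nat.card (A i ≃ₐ[F] B) = Nat.card (A i ≃ₐ[F] A i) :=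
    Nat.card_congr (AlgEquiv.refl.equivCongr e)
  have hpos : (Nat.card (A i ≃ₐ[F] B) : ℚ) ≠ 0 :=
    have : Nonempty (A i ≃ₐ[F] B) := ⟨e.symm⟩
    Nat.cast_ne_zero.2 Nat.card_pos.ne'
  rw [Finset.sum_eq_single i (fun j _ hj => by simp [hother j hj]) (by simp), ← hself,
    div_self hpos]

end IsomorphismClasses

section CyclicGroups

variable {G M : Type*} [Group G] [Group M]

lemma natCard_monoidHom_of_isCyclic [IsCyclic G] (hM : ∀ m : M, m ^ Nat.card G = 1) :
    Nat.card (G →* M) = Nat.card M := by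
  obtain ⟨g, hg⟩ := IsCyclic.exists_generator (α := G)
  refine Nat.card_congr (.ofBijective (fun f => f g) ⟨fun f f' h => ?_, fun m => ?_⟩)
  · exact (MonoidHom.eq_iff_eq_on_generator hg f f').2 h
  · have hm : orderOf m ∣ orderOf g := by
      rw [orderOf_eq_card_of_forall_mem_zpowers hg]
      exact orderOf_dvd_of_pow_eq_one (hM m)
    exact ⟨monoidHomOfForallMemZpowers hg hm, monoidHomOfForallMemZpowers_apply_gen hg hm⟩

end CyclicGroups

section ReducedAlgebras

variable {F K A : Type*} [Field F] [Field K] [Algebra F K] [CommRing A] [Algebra F A]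

lemma sigma_algHom_comp_quotientMk_injective :
    Function.Injective fun f : Σ I : MaximalSpectrum A, (A ⧸ I.asIdeal →ₐ[F] K) =>
      f.2.comp (Ideal.Quotient.mkₐ F f.1.asIdeal) := by
  have hker (I : MaximalSpectrum A) (f : A ⧸ I.asIdeal →ₐ[F] K) :
      RingHom.ker (f.comp (Ideal.Quotient.mkₐ F I.asIdeal)) = I.asIdeal := by
    let := Ideal.Quotient.field I.asIdeal
    ext a
    simpa [RingHom.mem_ker] using Ideal.Quotient.eq_zero_iff_mem
  rintro ⟨I, f⟩ ⟨J, g⟩ h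
  obtain rfl : I = J := MaximalSpectrum.ext <| by
    rw [← hker I f, ← hker J g]
    exact congrArg (fun k : A →ₐ[F] K => RingHom.ker k) h
  congr 1
  exact Ideal.Quotient.algHom_ext _ h

variable [FiniteDimensional F A] [IsReduced A]

lemma finrank_eq_sum_finrank_quotient [Fintype (MaximalSpectrum A)] :
    finrank F A = ∑ I : MaximalSpectrum A, finrank F (A ⧸ I.asIdeal) := by
  have : IsArtinianRing A := .of_finite F A
  rw [((IsArtinianRing.equivPi A).restrictScalars F).toLinearEquiv.finrank_eq,
    finrank_pi_fintype]

lemma isSplitBy_of_finrank_quotient_dvd [Finite K]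
    (hK : ∀ I : MaximalSpectrum A, finrank F (A ⧸ I.asIdeal) ∣ finrank F K) :
    IsSplitBy F K A := by
  have : IsArtinianRing A := .of_finite F A
  have := Fintype.ofFinite (MaximalSpectrum A)
  have hquot (I : MaximalSpectrum A) :
      Nat.card (A ⧸ I.asIdeal →ₐ[F] K) = finrank F (A ⧸ I.asIdeal) :=
    let := Ideal.Quotient.field I.asIdeal
    FiniteField.natCard_algHom_of_finrank_dvd (hK I)
  refine le_antisymm (card_algHom_le_finrank F A K) ?_
  calc finrank F A = Nat.card (Σ I : MaximalSpectrum A, (A ⧸ I.asIdeal →ₐ[F] K)) := by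
        simp only [finrank_eq_sum_finrank_quotient, Nat.card_sigma, hquot]
    _ ≤ Nat.card (A →ₐ[F] K) :=
        Nat.card_le_card_of_injective _ sigma_algHom_comp_quotientMk_injective

lemma isSplitBy_of_factorial_dvd [Finite K] (hK : (finrank F A)! ∣ finrank F K) :
    IsSplitBy F K A := by
  refine isSplitBy_of_finrank_quotient_dvd fun I => ?_
  have : Nontrivial (A ⧸ I.asIdeal) := Ideal.Quotient.nontrivial_iff.2 I.isMaximal.ne_top
  exact (Nat.dvd_factorial finrank_pos (LinearMap.finrank_le_finrank_of_surjective
    (f := (Ideal.Quotient.mkₐ F I.asIdeal).toLinearMap) Ideal.Quotient.mk_surjective)).trans hK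

end ReducedAlgebras

lemma natCard_galois_monoidHom_perm {F K X : Type*} [Field F] [Field K] [Algebra F K] [Finite K]
    [Finite X] (hK : (Nat.card X)! ∣ finrank F K) :
    Nat.card (Gal(K/F) →* Equiv.Perm X) = (Nat.card X)! := by
  have := Finite.of_injective _ (algebraMap F K).injective
  rw [natCard_monoidHom_of_isCyclic fun σ => ?_, Nat.card_perm]
  rw [← orderOf_dvd_iff_pow_eq_one, IsGalois.card_aut_eq_finrank]
  exact (orderOf_dvd_natCard σ).trans (Nat.card_perm (α := X) ▸ hK)

lemma exists_finite_extension_finrank_eq (F : Type u) [Field F] [Finite F] {n : ℕ} (hn : n ≠ 0) :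
    ∃ (K : Type v) (_ : Field K) (_ : Algebra F K), Finite K ∧ finrank F K = n := by
  have : NeZero n := ⟨hn⟩
  obtain ⟨p, hchar⟩ := CharP.exists F
  have : Fact p.Prime := ⟨CharP.char_is_prime F p⟩
  exact ⟨ULift (FiniteField.Extension F p n), inferInstance, inferInstance, inferInstance,
    (ULift.algEquiv (R := F)).toLinearEquiv.finrank_eq.trans
      (FiniteField.finrank_extension F p n)⟩

end EtaleMassFormula

open EtaleMassFormula

theorem mass_formula_etale_algebras_general {F : Type u} {K : Type v} {X : Type w} [Field F]
    [Field K] [Algebra F K] [FiniteDimensional F K] [IsGalois F K] [Finite X] {J : Type*}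
    [Fintype J] (A : J → Type*) [∀ j, CommRing (A j)] [∀ j, Algebra F (A j)]
    [∀ j, FiniteDimensional F (A j)] (hrank : ∀ j, finrank F (A j) = Nat.card X)
    (hsplit : ∀ j, IsSplitBy F K (A j)) (hirr : ∀ i j, Nonempty (A i ≃ₐ[F] A j) → i = j)
    (hcomplete : ∀ (B : Type (max v w)) [CommRing B] [Algebra F B], FiniteDimensional F B →
      finrank F B = Nat.card X → IsSplitBy F K B → ∃ j, Nonempty (B ≃ₐ[F] A j)) :
    ∑ j, (1 : ℚ) / Nat.card (A j ≃ₐ[F] A j) =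
      Nat.card (Gal(K/F) →* Equiv.Perm X) / (Nat.card X)! := by
  have : Finite (Gal(K/F) →* Equiv.Perm X) := .of_injective _ DFunLike.coe_injective
  have := Fintype.ofFinite (Gal(K/F) →* Equiv.Perm X)
  have hclass (ρ : Gal(K/F) →* Equiv.Perm X) :
      ∃ j, Nonempty (equivariantFunctions ρ ≃ₐ[F] A j) :=
    hcomplete _ inferInstance (finrank_equivariantFunctions ρ)
      (isSplitBy_equivariantFunctions ρ)
  rw [eq_div_iff (by positivity), Finset.sum_mul]
  calc ∑ j, (1 : ℚ) / Nat.card (A j ≃ₐ[F] A j) * (Nat.card X)!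
      = ∑ j, ∑ ρ : Gal(K/F) →* Equiv.Perm X,
          (Nat.card (A j ≃ₐ[F] equivariantFunctions ρ) : ℚ) / Nat.card (A j ≃ₐ[F] A j) := by
        refine Finset.sum_congr rfl fun j _ => ?_
        rw [← natCard_sigma_algEquiv_equivariantFunctions (hsplit j) (hrank j), Nat.card_sigma,
          Nat.cast_sum, ← Finset.sum_div, one_div_mul_eq_div]
    _ = ∑ ρ : Gal(K/F) →* Equiv.Perm X, 1 := by
        rw [Finset.sum_comm]
        exact Finset.sum_congr rfl fun ρ _ =>
          sum_natCard_algEquiv_div_natCard_aut hirr (hclass ρ)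
    _ = Nat.card (Gal(K/F) →* Equiv.Perm X) := by simp

/-- **Mass formula for étale algebras over a finite field.**
Let `F` be a finite field and `d ≥ 1`.  If `A₁, …, Aₘ` is a complete irredundant list of
representatives of the isomorphism classes of étale `F`-algebras of dimension `d`
(for a finite field, étale = commutative, finite-dimensional and reduced), then
`Σᵢ 1/#Aut_{F-alg}(Aᵢ) = 1`. -/
theorem mass_formula_etale_algebras (F : Type*) [Field F] [Finite F] (d m : ℕ)
    (hd : 1 ≤ d) (A : Fin m → Type*) [∀ i, CommRing (A i)] [∀ i, Algebra F (A i)]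
    (hfd : ∀ i, FiniteDimensional F (A i))
    (hrank : ∀ i, Module.finrank F (A i) = d)
    (hred : ∀ i, IsReduced (A i))
    (hirr : ∀ i j, Nonempty (A i ≃ₐ[F] A j) → i = j)
    (hcomplete : ∀ (B : Type*) [CommRing B] [Algebra F B], FiniteDimensional F B →
      Module.finrank F B = d → IsReduced B → ∃ i, Nonempty (B ≃ₐ[F] A i)) :
    ∑ i : Fin m, (1 : ℚ) / (Nat.card (A i ≃ₐ[F] A i)) = 1 := by
  obtain ⟨K, _, _, _, hK⟩ := exists_finite_extension_finrank_eq F d.factorial_ne_zero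
  have hhom : Nat.card (Gal(K/F) →* Equiv.Perm (Fin d)) = d ! := by
    simpa using natCard_galois_monoidHom_perm (X := Fin d) (by simp [hK])
  rw [mass_formula_etale_algebras_general (K := K) (X := Fin d) A (by simpa using hrank)
    (fun j => isSplitBy_of_factorial_dvd (by rw [hrank, hK])) hirr (fun B _ _ _ hB hBK =>
      hcomplete B inferInstance (by simpa using hB) hBK.isReduced), hhom, Nat.card_fin,
    div_self (by positivity)]
end

section
/- Let F be a finite field of cardinality q with q coprime to 6. Then the number of pairs (A,B) of symmetric 3×3 matrices over F with Δ₄(A,B) ≠ 0 equals q⁴(q−1)(q²−1)²(q³−1), i.e. q¹²·(1 − q⁻¹)(1 − q⁻²)²(1 − q⁻³). -/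
/-- The discriminant of the binary cubic form `a·x³ + b·x²y + c·xy² + d·y³`. -/
def disc3 {R : Type*} [CommRing R] (a b c d : R) : R :=
  b ^ 2 * c ^ 2 - 4 * a * c ^ 3 - 4 * b ^ 3 * d - 27 * a ^ 2 * d ^ 2 + 18 * a * b * c * d

/-- The binary cubic form `4·det(x·A − y·B)` associated to a pair of 3×3 matrices,
as an element of `R[x][y]` (the inner variable is `x`, the outer variable is `y`). -/
noncomputable def pairCubic {R : Type*} [CommRing R] (A B : Matrix (Fin 3) (Fin 3) R) :
    Polynomial (Polynomial R) :=
  4 * Matrix.det (Matrix.of fun i j =>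
    (Polynomial.C (Polynomial.C (A i j) * Polynomial.X) -
      Polynomial.X * Polynomial.C (Polynomial.C (B i j)) : Polynomial (Polynomial R)))

/-- The discriminant `Δ₄(A,B)` of a pair of 3×3 matrices: writing
`4·det(x·A − y·B) = a·x³ + b·x²y + c·xy² + d·y³`, it is `Δ₃(a,b,c,d)`. -/
noncomputable def disc4 {R : Type*} [CommRing R] (A B : Matrix (Fin 3) (Fin 3) R) : R :=
  disc3 (((pairCubic A B).coeff 0).coeff 3) (((pairCubic A B).coeff 1).coeff 2)
    (((pairCubic A B).coeff 2).coeff 1) (((pairCubic A B).coeff 3).coeff 0)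

/-!
Over a field in which `2` is invertible, `Δ₄(A, B)` is the discriminant of the cubic resolvent
`f = 4 det(x A - y B)`, so it suffices to count the pairs with `f` prescribed up to scaling, for
every `f` of nonzero discriminant. Shears and swaps in `(x, y)` reduce to the case where `f` has a
nonzero coefficient of `x³`. In that case `A` is invertible, and prescribing `f` up to scaling means
prescribing the characteristic polynomial of `T = A⁻¹ B`, which is separable; moreover `A` and `B`
are both symmetric if and only if `A T = Tᵀ A`. The matrices `T` with that characteristic polynomial
form one conjugacy class, stable under transposition, so for each of them the matrices `A` form a
coset of the centralizer of `T`. By orbit-stabilizer there are `|GL₃|` pairs, whatever `f` is.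

It remains to count the forms of nonzero discriminant. The monic cubics of discriminant zero are
those of the form `(X - r)² (X - s)`, and there are `q²` of them.
-/

open Polynomial Matrix

/-! ### Orbits and annihilators -/

theorem nat_card_smul_eq_of_mapsTo_orbit {G X : Type*} [Group G] [MulAction G X] {x₀ : X}
    {τ : X → X} (hτ : Set.MapsTo τ (MulAction.orbit G x₀) (MulAction.orbit G x₀)) :
    Nat.card {y : G × X // y.2 ∈ MulAction.orbit G x₀ ∧ y.1 • y.2 = τ y.2} = Nat.card G := by
  choose! s hs using fun x (hx : x ∈ MulAction.orbit G x₀) => MulAction.mem_orbit_iff.1 hx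
  rw [← Nat.card_congr (MulAction.orbitProdStabilizerEquivGroup G x₀)]
  -- The elements moving `x` to `τ x` form a coset of the stabilizer; `s` trivializes it.
  refine Nat.card_congr
    { toFun := fun y => (⟨y.1.2, y.2.1⟩, ⟨(s (τ y.1.2))⁻¹ * y.1.1 * s y.1.2, ?_⟩)
      invFun := fun z => ⟨(s (τ z.1) * z.2 * (s z.1)⁻¹, z.1), z.1.2, ?_⟩
      left_inv := fun y => by simp [mul_assoc]
      right_inv := fun z => by simp [mul_assoc] }
  · rw [MulAction.mem_stabilizer_iff, mul_smul, mul_smul, hs _ y.2.1, y.2.2, inv_smul_eq_iff,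
      hs _ (hτ y.2.1)]
  · have hz : (s z.1)⁻¹ • (z.1 : X) = x₀ := by rw [inv_smul_eq_iff, hs _ z.1.2]
    rw [mul_smul, hz, mul_smul, MulAction.mem_stabilizer_iff.1 z.2.2, hs _ (hτ z.1.2)]

section
variable {R M : Type*} [CommRing R] [AddCommGroup M] [Module R M]

theorem torsionOf_add_eq_span_mul {x y : M} {a b : R} (hab : IsCoprime a b)
    (hx : Ideal.torsionOf R M x = Ideal.span {a}) (hy : Ideal.torsionOf R M y = Ideal.span {b}) :
    Ideal.torsionOf R M (x + y) = Ideal.span {a * b} := by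
  simp only [Ideal.ext_iff, Ideal.mem_torsionOf_iff, Ideal.mem_span_singleton] at hx hy ⊢
  intro r
  constructor
  · intro hr
    refine hab.mul_dvd ?_ ?_
    · refine hab.dvd_of_dvd_mul_left ((hx _).1 ?_)
      have := congrArg (b • ·) hr
      simp only [smul_add, smul_smul, smul_zero] at this
      rwa [(hy _).2 (dvd_mul_right b r), add_zero] at this
    · refine hab.symm.dvd_of_dvd_mul_left ((hy _).1 ?_)
      have := congrArg (a • ·) hr
      simp only [smul_add, smul_smul, smul_zero] at this
      rwa [(hx _).2 (dvd_mul_right a r), zero_add] at this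
  · intro hr
    rw [smul_add, (hx _).2 (dvd_of_mul_right_dvd hr), (hy _).2 (dvd_of_mul_left_dvd hr), add_zero]

theorem exists_torsionOf_eq_span_prime_pow [IsDomain R] [IsPrincipalIdealRing R] {m p : R} {i : ℕ}
    (hm0 : m ≠ 0) (hm : Module.annihilator R M = Ideal.span {m}) (hp : Prime p) (hpm : p ^ i ∣ m) :
    ∃ x : M, Ideal.torsionOf R M x = Ideal.span {p ^ i} := by
  obtain _ | i := i
  · exact ⟨0, by simp⟩
  obtain ⟨u, rfl⟩ := hpm
  obtain ⟨x, hx⟩ : ∃ x : M, (p ^ i * u) • x ≠ 0 := by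
    by_contra! h
    have hdvd : p ^ (i + 1) * u ∣ p ^ i * u := by
      rw [← Ideal.mem_span_singleton, ← hm, Module.mem_annihilator]
      exact h
    rw [pow_succ', mul_assoc] at hdvd hm0
    exact hp.not_dvd_one ((mul_dvd_mul_iff_right (right_ne_zero_of_mul hm0)).1 (by rwa [one_mul]))
  refine ⟨u • x, ?_⟩
  obtain ⟨g, hg⟩ := (IsPrincipalIdealRing.principal (Ideal.torsionOf R M (u • x))).principal
  rw [hg]
  have mem (r : R) : (r * u) • x = 0 ↔ g ∣ r := by
    rw [← Ideal.mem_span_singleton, ← Ideal.submodule_span_eq, ← hg, Ideal.mem_torsionOf_iff,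
      smul_smul]
  obtain ⟨j, hj, hgj⟩ := (dvd_prime_pow hp _).1 ((mem (p ^ (i + 1))).1
    (Module.mem_annihilator.1 (hm ▸ Ideal.mem_span_singleton_self _) x))
  have : j = i + 1 := by
    by_contra h
    exact hx ((mem _).2 (hgj.dvd.trans (pow_dvd_pow p (by lia))))
  rw [Ideal.submodule_span_eq, Ideal.span_singleton_eq_span_singleton, ← this]
  exact hgj

theorem exists_torsionOf_eq_span_of_dvd [IsDomain R] [IsPrincipalIdealRing R] {m a : R}
    (hm0 : m ≠ 0) (hm : Module.annihilator R M = Ideal.span {m}) (ha : a ∣ m) :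
    ∃ x : M, Ideal.torsionOf R M x = Ideal.span {a} := by
  induction a using UniqueFactorizationMonoid.induction_on_coprime with
  | h0 => exact absurd (zero_dvd_iff.1 ha) hm0
  | h1 hu => exact ⟨0, by rw [Ideal.torsionOf_zero, Ideal.span_singleton_eq_top.2 hu]⟩
  | hpr i hp => exact exists_torsionOf_eq_span_prime_pow hm0 hm hp ha
  | hcp hab iha ihb =>
    obtain ⟨x, hx⟩ := iha (dvd_of_mul_right_dvd ha)
    obtain ⟨y, hy⟩ := ihb (dvd_of_mul_left_dvd ha)
    exact ⟨x + y, torsionOf_add_eq_span_mul hab.isCoprime hx hy⟩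

theorem exists_torsionOf_eq_annihilator [IsDomain R] [IsPrincipalIdealRing R]
    (h : Module.annihilator R M ≠ ⊥) : ∃ x : M, Ideal.torsionOf R M x = Module.annihilator R M := by
  obtain ⟨m, hm⟩ := (IsPrincipalIdealRing.principal (Module.annihilator R M)).principal
  rw [hm] at h ⊢
  exact exists_torsionOf_eq_span_of_dvd (by simpa using h) hm dvd_rfl

end

/-! ### Matrices with separable characteristic polynomial -/

theorem minpoly_eq_charpoly {F n : Type*} [Field F] [Fintype n] [DecidableEq n] {T : Matrix n n F}
    (hT : T.charpoly.Separable) : minpoly F T = T.charpoly := by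
  have hmin : (minpoly F T).Monic := minpoly.monic (Algebra.IsIntegral.isIntegral T)
  refine eq_of_monic_of_associated hmin T.charpoly_monic
    (associated_of_dvd_dvd T.minpoly_dvd_charpoly ?_)
  let φ := algebraMap F (AlgebraicClosure F)
  rw [← map_dvd_map' φ, ← T.charpoly_map φ]
  refine (IsAlgClosed.splits _).dvd_of_roots_le_roots (Matrix.charpoly_monic _).ne_zero ?_
  have hnodup : (T.map φ).charpoly.roots.Nodup := by
    rw [T.charpoly_map φ]
    exact nodup_roots hT.map
  refine (Multiset.le_iff_subset hnodup).2 fun r hr => ?_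
  rw [mem_roots (hmin.map φ).ne_zero]
  have hr' : r ∈ spectrum _ (T.map φ) :=
    mem_spectrum_iff_isRoot_charpoly.2 (isRoot_of_mem_roots hr)
  have hzero : aeval (T.map φ) ((minpoly F T).map φ) = 0 := by
    have := aeval_algHom_apply (Algebra.ofId F (AlgebraicClosure F)).mapMatrix T (minpoly F T)
    rwa [minpoly.aeval, map_zero, ← aeval_map_algebraMap (AlgebraicClosure F)] at this
  have hev := spectrum.subset_polynomial_aeval (T.map φ) ((minpoly F T).map φ) ⟨r, hr', rfl⟩
  obtain _ | _ := subsingleton_or_nontrivial (Matrix n n (AlgebraicClosure F))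
  · simp [spectrum.of_subsingleton] at hr'
  · rwa [hzero, spectrum.zero_eq, Set.mem_singleton_iff] at hev

section
variable {F n : Type*} [Field F] [Fintype n] [DecidableEq n]

/-- The map `f ↦ f(T) v`, whose range is the Krylov subspace of `T` generated by `v`. For `T` with
separable characteristic polynomial and suitable `v` it identifies `n → F` with
`F[X] / (T.charpoly)`. -/
noncomputable def krylovMap (T : Matrix n n F) (v : n → F) : F[X] →ₗ[F] (n → F) :=
  (Matrix.mulVecBilin F F).flip v ∘ₗ (aeval T).toLinearMap

theorem krylovMap_apply (T : Matrix n n F) (v : n → F) (f : F[X]) :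
    krylovMap T v f = aeval T f *ᵥ v := rfl

theorem krylovMap_X_mul (T : Matrix n n F) (v : n → F) (f : F[X]) :
    krylovMap T v (X * f) = T *ᵥ krylovMap T v f := by
  simp only [krylovMap_apply, map_mul, aeval_X, mulVec_mulVec]

open scoped Matrix.Module in
theorem exists_ker_krylovMap_eq {T : Matrix n n F} (hT : T.charpoly.Separable) :
    ∃ v, (krylovMap T v).ker = (Ideal.span {T.charpoly}).restrictScalars F := by
  have : FaithfulSMul (Matrix n n F) (n → F) := ⟨fun h => ext_of_mulVec_single fun i => h _⟩
  have hann : Module.annihilator F[X] (Module.AEval F (n → F) T) = Ideal.span {T.charpoly} := by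
    rw [Module.AEval.annihilator_eq_ker_aeval, minpoly.ker_aeval_eq_span_minpoly,
      minpoly_eq_charpoly hT]
  obtain ⟨v, hv⟩ := exists_torsionOf_eq_annihilator (R := F[X]) (M := Module.AEval F (n → F) T)
    (by simpa [hann] using T.charpoly_monic.ne_zero)
  refine ⟨(Module.AEval.of F (n → F) T).symm v, ?_⟩
  rw [← hann, ← hv]
  rfl

theorem krylovMap_surjective {T : Matrix n n F} {v : n → F}
    (hv : (krylovMap T v).ker = (Ideal.span {T.charpoly}).restrictScalars F) :
    Function.Surjective (krylovMap T v) := by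
  rw [← LinearMap.range_eq_top]
  apply Submodule.eq_top_of_finrank_eq
  rw [← (krylovMap T v).quotKerEquivRange.finrank_eq, hv,
    (Submodule.Quotient.restrictScalarsEquiv F (Ideal.span {T.charpoly})).finrank_eq,
    finrank_quotient_span_eq_natDegree, T.charpoly_natDegree_eq_dim, Module.finrank_pi]

theorem exists_mul_eq_mul_of_charpoly_eq {S T : Matrix n n F} (hS : S.charpoly.Separable)
    (h : T.charpoly = S.charpoly) : ∃ g : GL n F, g.1 * S = T * g.1 := by
  obtain ⟨v, hv⟩ := exists_ker_krylovMap_eq hS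
  obtain ⟨w, hw⟩ := exists_ker_krylovMap_eq (h ▸ hS)
  let e := ((krylovMap S v).quotKerEquivOfSurjective (krylovMap_surjective hv)).symm ≪≫ₗ
    Submodule.quotEquivOfEq _ _ (by rw [hv, hw, h]) ≪≫ₗ
    (krylovMap T w).quotKerEquivOfSurjective (krylovMap_surjective hw)
  have he (f : F[X]) : e (krylovMap S v f) = krylovMap T w f := by
    simp [e, LinearMap.quotKerEquivOfSurjective_symm_apply]
  let g : GL n F := GeneralLinearGroup.toLin.symm (.ofLinearEquiv e)
  have hg (x : n → F) : g.1 *ᵥ x = e x := by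
    rw [← mulVecLin_apply, ← GeneralLinearGroup.toLin_apply, MulEquiv.apply_symm_apply]
    rfl
  refine ⟨g, Matrix.ext_of_mulVec_single fun i => ?_⟩
  obtain ⟨f, hf⟩ := krylovMap_surjective hv (Pi.single i 1)
  rw [← mulVec_mulVec, ← mulVec_mulVec, ← hf, hg, hg, he, ← krylovMap_X_mul, he, krylovMap_X_mul]

theorem mem_orbit_conjAct_iff {S T : Matrix n n F} (hS : S.charpoly.Separable) :
    T ∈ MulAction.orbit (ConjAct (GL n F)) S ↔ T.charpoly = S.charpoly := by
  refine ⟨fun ⟨g, hg⟩ => ?_, fun h => ?_⟩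
  · rw [← show g • S = T from hg, ConjAct.units_smul_def, coe_units_inv, charpoly_units_conj]
  · obtain ⟨g, hg⟩ := exists_mul_eq_mul_of_charpoly_eq hS h
    exact ⟨ConjAct.toConjAct g, (Units.mul_inv_eq_iff_eq_mul g).2 hg⟩

theorem transpose_aeval_mul_eq {T A : Matrix n n F} (h : Tᵀ * A = A * T) (f : F[X]) :
    (aeval T f)ᵀ * A = A * aeval T f := by
  have hpow (k : ℕ) : (Tᵀ) ^ k * A = A * T ^ k :=
    (SemiconjBy.pow_right (show SemiconjBy A T Tᵀ from h.symm) k).symm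
  simp only [aeval_eq_sum_range, transpose_sum, transpose_smul, transpose_pow, Finset.sum_mul,
    Finset.mul_sum, Matrix.smul_mul, Matrix.mul_smul, hpow]

theorem isSymm_of_transpose_mul_eq {T A : Matrix n n F} (hT : T.charpoly.Separable)
    (h : Tᵀ * A = A * T) : A.IsSymm := by
  obtain ⟨v, hv⟩ := exists_ker_krylovMap_eq hT
  -- `h` moves `f(T)` across the form, so its symmetry on `F[T] v` is commutativity of `F[X]`.
  have hdot (f g : F[X]) : krylovMap T v f ⬝ᵥ A *ᵥ krylovMap T v g =
      v ⬝ᵥ A *ᵥ krylovMap T v (f * g) := by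
    simp only [krylovMap_apply, map_mul]
    rw [← mulVec_mulVec _ (aeval T f), mulVec_mulVec _ A (aeval T f),
      ← transpose_aeval_mul_eq h f, ← mulVec_mulVec, dotProduct_mulVec v, vecMul_transpose]
  ext i j
  obtain ⟨f, hf⟩ := krylovMap_surjective hv (Pi.single i 1)
  obtain ⟨g, hg⟩ := krylovMap_surjective hv (Pi.single j 1)
  have hsymm := (hdot g f).trans ((mul_comm g f ▸ hdot f g).symm)
  simpa [hf, hg] using hsymm

theorem exists_matrix_charpoly_eq {p : F[X]} (hp : p.Monic) (hn : p.natDegree = Fintype.card n) :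
    ∃ T : Matrix n n F, T.charpoly = p := by
  let pb := AdjoinRoot.powerBasis hp.ne_zero
  have e : Fin pb.dim ≃ n := Fintype.equivOfCardEq (by simp [pb, hn])
  refine ⟨(Algebra.leftMulMatrix pb.basis pb.gen).reindex e e, ?_⟩
  rw [charpoly_reindex, charpoly_leftMulMatrix, AdjoinRoot.powerBasis_gen,
    AdjoinRoot.minpoly_root hp.ne_zero, hp.leadingCoeff, inv_one, C_1, mul_one]

theorem isSymm_and_isSymm_mul_iff {T A : Matrix n n F} (hT : T.charpoly.Separable) :
    A.IsSymm ∧ (A * T).IsSymm ↔ A * T = Tᵀ * A := by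
  simp only [IsSymm, transpose_mul]
  refine ⟨fun ⟨hA, hAT⟩ => by rw [← hAT, hA], fun h => ?_⟩
  have hA := isSymm_of_transpose_mul_eq hT h.symm
  exact ⟨hA, by rw [hA.eq, h]⟩

theorem nat_card_mul_eq_transpose_mul {p : F[X]} (hmonic : p.Monic) (hsep : p.Separable)
    (hn : p.natDegree = Fintype.card n) :
    Nat.card {Y : GL n F × Matrix n n F // Y.2.charpoly = p ∧ Y.1.1 * Y.2 = Y.2ᵀ * Y.1.1} =
      Nat.card (GL n F) := by
  obtain ⟨S, rfl⟩ := exists_matrix_charpoly_eq hmonic hn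
  have hτ : Set.MapsTo transpose (MulAction.orbit (ConjAct (GL n F)) S)
      (MulAction.orbit (ConjAct (GL n F)) S) := fun T hT => by
    rwa [mem_orbit_conjAct_iff hsep, charpoly_transpose, ← mem_orbit_conjAct_iff hsep]
  refine (Nat.card_congr (Equiv.subtypeEquiv (ConjAct.toConjAct.toEquiv.prodCongr (.refl _))
    fun Y => ?_)).trans (nat_card_smul_eq_of_mapsTo_orbit hτ)
  rw [mem_orbit_conjAct_iff hsep]
  exact and_congr_right' (Units.mul_inv_eq_iff_eq_mul Y.1).symm

theorem nat_card_symPairs_charpoly_eq {p : F[X]} (hmonic : p.Monic) (hsep : p.Separable)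
    (hn : p.natDegree = Fintype.card n) :
    Nat.card {P : Matrix n n F × Matrix n n F // P.1.IsSymm ∧ P.2.IsSymm ∧ P.1.det ≠ 0 ∧
      (P.1⁻¹ * P.2).charpoly = p} = Nat.card (GL n F) := by
  rw [← nat_card_mul_eq_transpose_mul hmonic hsep hn]
  refine Nat.card_congr
    { toFun := fun P =>
        ⟨(GeneralLinearGroup.mkOfDetNeZero P.1.1 P.2.2.2.1, P.1.1⁻¹ * P.1.2), P.2.2.2.2, ?_⟩
      invFun := fun Y => ⟨(Y.1.1, Y.1.1 * Y.1.2), ?_⟩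
      left_inv := fun ⟨⟨A, B⟩, _, _, hdet, _⟩ => ?_
      right_inv := fun ⟨⟨A, T⟩, _⟩ => ?_ }
  · obtain ⟨⟨A, B⟩, hA, hB, hdet, rfl⟩ := P
    exact (isSymm_and_isSymm_mul_iff hsep).1
      ⟨hA, (mul_nonsing_inv_cancel_left A B hdet.isUnit).symm ▸ hB⟩
  · obtain ⟨⟨A, T⟩, rfl, hAT⟩ := Y
    obtain ⟨hA, hB⟩ := (isSymm_and_isSymm_mul_iff hsep).2 hAT
    refine ⟨hA, hB, A.det_ne_zero, ?_⟩
    rw [nonsing_inv_mul_cancel_left _ _ A.det_ne_zero.isUnit]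
  · exact Subtype.ext (Prod.ext rfl (mul_nonsing_inv_cancel_left A B hdet.isUnit))
  · exact Subtype.ext
      (Prod.ext (Units.ext rfl) (nonsing_inv_mul_cancel_left _ _ A.det_ne_zero.isUnit))

end

/-! ### Binary cubic forms and the cubic resolvent -/

section
variable {R : Type*} [CommRing R]

-- `⟨a, b, c, d⟩ : Cubic R` stands for the binary form `a x³ + b x² y + c x y² + d y³`; its `toPoly`
-- is the dehomogenization at `y = 1`.
instance : MulAction R (Cubic R) where
  smul l f := ⟨l * f.a, l * f.b, l * f.c, l * f.d⟩
  one_smul _ := Cubic.ext (one_mul _) (one_mul _) (one_mul _) (one_mul _)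
  mul_smul _ _ _ :=
    Cubic.ext (mul_assoc _ _ _) (mul_assoc _ _ _) (mul_assoc _ _ _) (mul_assoc _ _ _)

theorem cubic_smul_def (l : R) (f : Cubic R) : l • f = ⟨l * f.a, l * f.b, l * f.c, l * f.d⟩ := rfl

theorem discr_smul (l : R) (f : Cubic R) : (l • f).discr = l ^ 4 * f.discr := by
  simp only [cubic_smul_def, Cubic.discr]
  ring

theorem toPoly_smul (l : R) (f : Cubic R) : (l • f).toPoly = C l * f.toPoly := by
  simp only [cubic_smul_def, Cubic.toPoly, C_mul]
  ring

/-- The binary cubic form `f(x, y + t x)`. -/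
def shearCubic (t : R) (f : Cubic R) : Cubic R :=
  ⟨f.a + f.b * t + f.c * t ^ 2 + f.d * t ^ 3, f.b + 2 * f.c * t + 3 * f.d * t ^ 2,
    f.c + 3 * f.d * t, f.d⟩

theorem shearCubic_smul (t l : R) (f : Cubic R) : shearCubic t (l • f) = l • shearCubic t f := by
  ext <;> simp only [shearCubic, cubic_smul_def] <;> ring

theorem shearCubic_neg_shearCubic (t : R) (f : Cubic R) : shearCubic (-t) (shearCubic t f) = f := by
  ext <;> simp only [shearCubic] <;> ring

theorem discr_shearCubic (t : R) (f : Cubic R) : (shearCubic t f).discr = f.discr := by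
  simp only [shearCubic, Cubic.discr]
  ring

/-- The binary cubic form `-f(y, x)`; with this sign, swapping `A` and `B` swaps their cubic
resolvent. -/
def swapCubic (f : Cubic R) : Cubic R := ⟨-f.d, -f.c, -f.b, -f.a⟩

theorem swapCubic_smul (l : R) (f : Cubic R) : swapCubic (l • f) = l • swapCubic f := by
  simp only [swapCubic, cubic_smul_def, mul_neg]

theorem swapCubic_swapCubic (f : Cubic R) : swapCubic (swapCubic f) = f := by
  simp only [swapCubic, neg_neg]

theorem discr_swapCubic (f : Cubic R) : (swapCubic f).discr = f.discr := by
  simp only [swapCubic, Cubic.discr]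
  ring

/-- The cubic resolvent `4 det(x A - y B)` of a pair of `3 × 3` matrices, with the mixed
coefficients written through adjugates. -/
def cubicResolvent (A B : Matrix (Fin 3) (Fin 3) R) : Cubic R :=
  ⟨4 * A.det, -4 * (A.adjugate * B).trace, 4 * (A * B.adjugate).trace, -4 * B.det⟩

theorem pairCubic_eq (A B : Matrix (Fin 3) (Fin 3) R) :
    pairCubic A B =
      C (C (cubicResolvent A B).a * X ^ 3) + C (C (cubicResolvent A B).b * X ^ 2) * X +
        C (C (cubicResolvent A B).c * X) * X ^ 2 + C (C (cubicResolvent A B).d) * X ^ 3 := by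
  simp only [pairCubic, cubicResolvent, det_fin_three, adjugate_fin_three, trace_fin_three,
    mul_apply, Fin.sum_univ_three, of_apply, cons_val]
  simp only [map_mul, map_add, map_sub, map_neg, map_ofNat, map_pow]
  ring

theorem disc4_eq_discr_cubicResolvent (A B : Matrix (Fin 3) (Fin 3) R) :
    disc4 A B = (cubicResolvent A B).discr := by
  change _ = disc3 _ _ _ _
  rw [disc4, pairCubic_eq]
  congr 1 <;> simp only [coeff_add, coeff_C_mul_X_pow, coeff_C_mul_X, coeff_C] <;> simp [coeff_C]

theorem cubicResolvent_sub_smul (t : R) (A B : Matrix (Fin 3) (Fin 3) R) :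
    cubicResolvent (A - t • B) B = shearCubic t (cubicResolvent A B) := by
  simp only [shearCubic, cubicResolvent, det_fin_three, adjugate_fin_three, trace_fin_three,
    mul_apply, Fin.sum_univ_three, of_apply, cons_val, Matrix.sub_apply, Matrix.smul_apply,
    smul_eq_mul, Cubic.mk.injEq]
  refine ⟨?_, ?_, ?_, trivial⟩ <;> ring

theorem cubicResolvent_swap (A B : Matrix (Fin 3) (Fin 3) R) :
    cubicResolvent B A = swapCubic (cubicResolvent A B) := by
  simp only [cubicResolvent, swapCubic, neg_mul, neg_neg, trace_mul_comm A, trace_mul_comm B]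

theorem toPoly_cubicResolvent (A B : Matrix (Fin 3) (Fin 3) R) :
    (cubicResolvent A B).toPoly = 4 * ((X : R[X]) • A.map C - B.map C).det := by
  simp only [Cubic.toPoly, cubicResolvent, det_fin_three, adjugate_fin_three, trace_fin_three,
    mul_apply, Fin.sum_univ_three, of_apply, cons_val, Matrix.sub_apply, Matrix.smul_apply,
    map_apply, smul_eq_mul]
  simp only [map_mul, map_add, map_sub, map_neg, map_ofNat]
  ring

theorem toPoly_cubicResolvent_mul (A T : Matrix (Fin 3) (Fin 3) R) :
    (cubicResolvent A (A * T)).toPoly = C (4 * A.det) * T.charpoly := by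
  have h : (X : R[X]) • A.map C - (A * T).map C = A.map C * T.charmatrix := by
    rw [charmatrix, mul_sub, Matrix.map_mul, RingHom.mapMatrix_apply, Matrix.scalar_apply,
      ← smul_eq_mul_diagonal]
  rw [toPoly_cubicResolvent, h, det_mul, Matrix.charpoly, ← RingHom.mapMatrix_apply,
    ← RingHom.map_det, C_mul, mul_assoc]
  rfl

end

theorem separable_toPoly_iff {F : Type*} [Field F] {f : Cubic F} (ha : f.a ≠ 0) :
    f.toPoly.Separable ↔ f.discr ≠ 0 := by
  have hs : (f.toPoly.map (algebraMap F (AlgebraicClosure F))).Splits := IsAlgClosed.splits _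
  rw [← nodup_aroots_iff_of_splits (Cubic.ne_zero_of_a_ne_zero ha) hs,
    Cubic.discr_ne_zero_iff_roots_nodup ha hs, Cubic.map_roots]

/-! ### Pairs with a given cubic resolvent -/

section
variable {R : Type*} [CommRing R]

/-- The triples `(l, A, B)` with `A` and `B` symmetric of cubic resolvent `l • f`. The free scalar
`l` absorbs `4 det A`, so that only the characteristic polynomial of `A⁻¹ B` is constrained. -/
def resolventFibre (f : Cubic R) :
    Set (Rˣ × Matrix (Fin 3) (Fin 3) R × Matrix (Fin 3) (Fin 3) R) :=
  {y | y.2.1.IsSymm ∧ y.2.2.IsSymm ∧ cubicResolvent y.2.1 y.2.2 = y.1 • f}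

theorem sub_smul_mem_resolventFibre {f : Cubic R} {l : Rˣ} {A B : Matrix (Fin 3) (Fin 3) R} (t : R)
    (h : (l, A, B) ∈ resolventFibre f) : (l, A - t • B, B) ∈ resolventFibre (shearCubic t f) := by
  obtain ⟨hA, hB, h⟩ := h
  refine ⟨hA.sub (hB.smul t), hB, ?_⟩
  rw [cubicResolvent_sub_smul, h]
  exact shearCubic_smul t (l : R) f

theorem swap_mem_resolventFibre {f : Cubic R} {l : Rˣ} {A B : Matrix (Fin 3) (Fin 3) R}
    (h : (l, A, B) ∈ resolventFibre f) : (l, B, A) ∈ resolventFibre (swapCubic f) := by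
  obtain ⟨hA, hB, h⟩ := h
  refine ⟨hB, hA, ?_⟩
  rw [cubicResolvent_swap, h]
  exact swapCubic_smul (l : R) f

theorem nat_card_resolventFibre_shearCubic (t : R) (f : Cubic R) :
    Nat.card (resolventFibre (shearCubic t f)) = Nat.card (resolventFibre f) := by
  symm
  refine Nat.card_congr
    { toFun := fun y => ⟨_, sub_smul_mem_resolventFibre t y.2⟩
      invFun := fun y => ⟨(y.1.1, y.1.2.1 - (-t) • y.1.2.2, y.1.2.2), ?_⟩
      left_inv := fun y => by simp
      right_inv := fun y => by simp }
  have h := sub_smul_mem_resolventFibre (-t) y.2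
  rwa [shearCubic_neg_shearCubic] at h

theorem nat_card_resolventFibre_swapCubic (f : Cubic R) :
    Nat.card (resolventFibre (swapCubic f)) = Nat.card (resolventFibre f) := by
  symm
  refine Nat.card_congr
    { toFun := fun y => ⟨_, swap_mem_resolventFibre y.2⟩
      invFun := fun y => ⟨(y.1.1, y.1.2.2, y.1.2.1), ?_⟩
      left_inv := fun _ => rfl
      right_inv := fun _ => rfl }
  have h := swap_mem_resolventFibre y.2
  rwa [swapCubic_swapCubic] at h

end

section
variable {F : Type*} [Field F]

theorem cubicResolvent_eq_smul_iff {f : Cubic F} (ha : f.a ≠ 0) {l : Fˣ}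
    {A B : Matrix (Fin 3) (Fin 3) F} :
    cubicResolvent A B = l • f ↔
      A.det ≠ 0 ∧ (A⁻¹ * B).charpoly = C f.a⁻¹ * f.toPoly ∧ (l : F) = 4 * A.det / f.a := by
  have hpoly (hdet : A.det ≠ 0) :
      (cubicResolvent A B).toPoly = C (4 * A.det) * (A⁻¹ * B).charpoly := by
    rw [← toPoly_cubicResolvent_mul, mul_nonsing_inv_cancel_left A B hdet.isUnit]
  refine ⟨fun h => ?_, fun ⟨hdet, hchar, hl⟩ => ?_⟩
  · have hla : 4 * A.det = l * f.a := congrArg Cubic.a h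
    have hdet : A.det ≠ 0 := right_ne_zero_of_mul (hla ▸ mul_ne_zero l.ne_zero ha)
    refine ⟨hdet, ?_, by rw [hla, mul_div_cancel_right₀ _ ha]⟩
    have hC : C (l : F) ≠ 0 := C_ne_zero.2 l.ne_zero
    have := hpoly hdet
    rw [h, Units.smul_def, toPoly_smul, hla, C_mul, mul_assoc, mul_right_inj' hC] at this
    rw [this, ← mul_assoc, ← C_mul, inv_mul_cancel₀ ha, C_1, one_mul]
  · rw [← Cubic.toPoly_injective, hpoly hdet, hchar, Units.smul_def, toPoly_smul, hl,
      ← mul_assoc, ← C_mul, div_eq_mul_inv]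

variable [NeZero (2 : F)]

theorem four_ne_zero_of_neZero_two : (4 : F) ≠ 0 := by
  rw [show (4 : F) = 2 ^ 2 by norm_num]
  exact pow_ne_zero 2 two_ne_zero

theorem nat_card_resolventFibre_of_a_ne_zero {f : Cubic F} (ha : f.a ≠ 0) (hf : f.discr ≠ 0) :
    Nat.card (resolventFibre f) = Nat.card (GL (Fin 3) F) := by
  have hmonic : (C f.a⁻¹ * f.toPoly).Monic := by
    rw [mul_comm, ← Cubic.leadingCoeff_of_a_ne_zero ha]
    exact monic_mul_leadingCoeff_inv (Cubic.ne_zero_of_a_ne_zero ha)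
  have hsep : (C f.a⁻¹ * f.toPoly).Separable :=
    ((separable_toPoly_iff ha).2 hf).unit_mul (isUnit_C.2 (inv_ne_zero ha).isUnit)
  have hdeg : (C f.a⁻¹ * f.toPoly).natDegree = Fintype.card (Fin 3) := by
    rw [natDegree_C_mul (inv_ne_zero ha), Cubic.natDegree_of_a_ne_zero ha, Fintype.card_fin]
  rw [← nat_card_symPairs_charpoly_eq hmonic hsep hdeg]
  refine Nat.card_eq_of_bijective (fun y => ⟨y.1.2, y.2.1, y.2.2.1, ?_⟩) ⟨?_, ?_⟩
  · have h := (cubicResolvent_eq_smul_iff ha).1 y.2.2.2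
    exact ⟨h.1, h.2.1⟩
  · rintro ⟨⟨l, P⟩, _, _, h⟩ ⟨⟨l', P'⟩, _, _, h'⟩ hP
    obtain rfl : P = P' := congrArg Subtype.val hP
    have hl : l = l' := Units.ext <| ((cubicResolvent_eq_smul_iff ha).1 h).2.2.trans
      ((cubicResolvent_eq_smul_iff ha).1 h').2.2.symm
    exact Subtype.ext (Prod.ext hl rfl)
  · rintro ⟨P, hA, hB, hdet, hchar⟩
    have hl : 4 * P.1.det / f.a ≠ 0 :=
      div_ne_zero (mul_ne_zero four_ne_zero_of_neZero_two hdet) ha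
    exact ⟨⟨(Units.mk0 _ hl, P), hA, hB,
      (cubicResolvent_eq_smul_iff ha).2 ⟨hdet, hchar, Units.val_mk0 hl⟩⟩, rfl⟩

theorem exists_shearCubic_a_ne_zero {f : Cubic F} (ha : f.a = 0) (hd : f.d = 0)
    (hf : f.discr ≠ 0) : ∃ t, (shearCubic t f).a ≠ 0 := by
  by_contra! h
  have h₁ : f.b + f.c = 0 := by simpa [shearCubic, ha, hd] using h 1
  have h₂ : f.c - f.b = 0 := by simpa [shearCubic, ha, hd, neg_add_eq_sub] using h (-1)
  have hc : f.c = 0 :=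
    (mul_eq_zero.1 (by linear_combination h₁ + h₂ : 2 * f.c = 0)).resolve_left two_ne_zero
  exact hf (by simp [Cubic.discr, ha, hd, hc])

theorem nat_card_resolventFibre {f : Cubic F} (hf : f.discr ≠ 0) :
    Nat.card (resolventFibre f) = Nat.card (GL (Fin 3) F) := by
  by_cases ha : f.a = 0
  · by_cases hd : f.d = 0
    · obtain ⟨t, ht⟩ := exists_shearCubic_a_ne_zero ha hd hf
      rw [← nat_card_resolventFibre_shearCubic t,
        nat_card_resolventFibre_of_a_ne_zero ht (by rwa [discr_shearCubic])]
    · rw [← nat_card_resolventFibre_swapCubic,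
        nat_card_resolventFibre_of_a_ne_zero (neg_ne_zero.2 hd) (by rwa [discr_swapCubic])]
  · exact nat_card_resolventFibre_of_a_ne_zero ha hf

end

/-! ### Binary cubic forms of nonzero discriminant -/

section
variable {R : Type*} [CommRing R]

/-- The binary cubic form `(x - r y)² (x - s y)`. -/
def doubleRootCubic (r s : R) : Cubic R :=
  ⟨1, -(2 * r + s), r ^ 2 + 2 * r * s, -(r ^ 2 * s)⟩

theorem toPoly_doubleRootCubic (r s : R) :
    (doubleRootCubic r s).toPoly = (X - C r) ^ 2 * (X - C s) := by
  simp only [doubleRootCubic, Cubic.toPoly, C_neg, C_add, C_mul, C_pow, C_1, C_ofNat]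
  ring

theorem discr_doubleRootCubic (r s : R) : (doubleRootCubic r s).discr = 0 := by
  simp only [doubleRootCubic, Cubic.discr]
  ring

theorem doubleRootCubic_injective [IsDomain R] :
    Function.Injective fun p : R × R => doubleRootCubic p.1 p.2 := by
  rintro ⟨r, s⟩ ⟨r', s'⟩ h
  obtain ⟨-, hb, hc, hd⟩ := Cubic.mk.inj h
  dsimp only at hb hc hd
  have hr : (r - r') ^ 2 * (r - s') = 0 := by linear_combination (-r ^ 2) * hb - r * hc - hd
  have hr' : (r' - r) ^ 2 * (r' - s) = 0 := by linear_combination r' ^ 2 * hb + r' * hc + hd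
  have hrr' : r = r' := by
    by_contra hne
    have hs' := (mul_eq_zero.1 hr).resolve_left (pow_ne_zero 2 (sub_ne_zero.2 hne))
    have hs := (mul_eq_zero.1 hr').resolve_left (pow_ne_zero 2 (sub_ne_zero.2 (Ne.symm hne)))
    exact hne (by linear_combination hs - hs' - hb)
  subst hrr'
  exact Prod.ext rfl (by linear_combination -hb)

instance [Finite R] : Finite (Cubic R) :=
  .of_injective (fun f : Cubic R => (f.a, f.b, f.c, f.d)) fun f g h => by
    simp only [Prod.mk.injEq] at h
    exact Cubic.ext h.1 h.2.1 h.2.2.1 h.2.2.2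

theorem ncard_a_eq_one : {f : Cubic R | f.a = 1}.ncard = Nat.card R ^ 3 := by
  have hinj : Function.Injective fun p : R × R × R => (⟨1, p.1, p.2.1, p.2.2⟩ : Cubic R) :=
    fun p p' h => by
      obtain ⟨-, hb, hc, hd⟩ := Cubic.mk.inj h
      exact Prod.ext hb (Prod.ext hc hd)
  have hrange : {f : Cubic R | f.a = 1} = Set.range fun p : R × R × R => ⟨1, p.1, p.2.1, p.2.2⟩ :=
    Set.ext fun f => ⟨fun hf => ⟨(f.b, f.c, f.d), Cubic.ext (Eq.symm hf) rfl rfl rfl⟩,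
      by rintro ⟨p, rfl⟩; rfl⟩
  rw [hrange, Set.ncard_range_of_injective hinj, Nat.card_prod, Nat.card_prod, pow_succ', sq]

end

section
variable {F : Type*} [Field F]

theorem exists_sq_dvd_toPoly_of_discr_eq_zero [PerfectField F] {f : Cubic F} (ha : f.a ≠ 0)
    (hf : f.discr = 0) : ∃ r, (X - C r) ^ 2 ∣ f.toPoly := by
  have hf0 := Cubic.ne_zero_of_a_ne_zero ha
  obtain ⟨p, hdvd, hp⟩ : ∃ p, p ^ 2 ∣ f.toPoly ∧ ¬IsUnit p := by
    have := mt (separable_toPoly_iff ha).1 (not_not.2 hf)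
    rw [PerfectField.separable_iff_squarefree] at this
    simpa only [Squarefree, not_forall, exists_prop, sq] using this
  have hp0 : p ≠ 0 := by
    rintro rfl
    exact hf0 (by simpa using hdvd)
  have hdeg : p.degree = 1 := by
    have hle := natDegree_le_of_dvd hdvd hf0
    rw [natDegree_pow, Cubic.natDegree_of_a_ne_zero ha] at hle
    have hpos : p.natDegree ≠ 0 := fun h => hp ((isUnit_iff_degree_eq_zero).2
      (by rw [degree_eq_natDegree hp0, h, Nat.cast_zero]))
    rw [degree_eq_natDegree hp0, show p.natDegree = 1 by lia, Nat.cast_one]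
  obtain ⟨r, hr⟩ := exists_root_of_degree_eq_one hdeg
  exact ⟨r, (pow_dvd_pow_of_dvd (dvd_iff_isRoot.2 hr) 2).trans hdvd⟩

theorem exists_doubleRootCubic_eq [PerfectField F] {f : Cubic F} (ha : f.a = 1)
    (hf : f.discr = 0) : ∃ r s, doubleRootCubic r s = f := by
  have ha0 : f.a ≠ 0 := ha ▸ one_ne_zero
  obtain ⟨r, g, hg⟩ := exists_sq_dvd_toPoly_of_discr_eq_zero ha0 hf
  have hsq : ((X - C r) ^ 2).Monic := (monic_X_sub_C r).pow 2
  have hgm : g.Monic := hsq.of_mul_monic_left (hg ▸ Cubic.monic_of_a_eq_one ha)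
  have hg1 : g.natDegree = 1 := by
    have := Cubic.natDegree_of_a_ne_zero ha0
    rw [hg, hsq.natDegree_mul hgm, (monic_X_sub_C r).natDegree_pow, natDegree_X_sub_C] at this
    lia
  refine ⟨r, -g.coeff 0, (Cubic.toPoly_injective _ _).1 ?_⟩
  rw [toPoly_doubleRootCubic, hg, C_neg, sub_neg_eq_add, ← hgm.eq_X_add_C hg1]

theorem ncard_a_eq_one_discr_eq_zero [PerfectField F] :
    {f : Cubic F | f.a = 1 ∧ f.discr = 0}.ncard = Nat.card F ^ 2 := by
  have hrange : {f : Cubic F | f.a = 1 ∧ f.discr = 0} =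
      Set.range fun p : F × F => doubleRootCubic p.1 p.2 :=
    Set.ext fun f => ⟨fun ⟨ha, hf⟩ => Prod.exists.2 (exists_doubleRootCubic_eq ha hf), by
      rintro ⟨p, rfl⟩
      exact ⟨rfl, discr_doubleRootCubic _ _⟩⟩
  rw [hrange, Set.ncard_range_of_injective doubleRootCubic_injective, Nat.card_prod, sq]

theorem ncard_a_eq_one_discr_ne_zero [Finite F] :
    {f : Cubic F | f.a = 1 ∧ f.discr ≠ 0}.ncard = Nat.card F ^ 3 - Nat.card F ^ 2 := by
  have hsub : {f : Cubic F | f.a = 1 ∧ f.discr = 0} ⊆ {f | f.a = 1} := fun _ hf => hf.1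
  rw [← ncard_a_eq_one, ← ncard_a_eq_one_discr_eq_zero, ← Set.ncard_sdiff hsub]
  congr 1
  ext f
  simp +contextual

theorem ncard_a_ne_zero_discr_ne_zero [Finite F] :
    {f : Cubic F | f.a ≠ 0 ∧ f.discr ≠ 0}.ncard =
      (Nat.card F - 1) * (Nat.card F ^ 3 - Nat.card F ^ 2) := by
  let S : Set (Cubic F) := {f | f.a = 1 ∧ f.discr ≠ 0}
  have hinj : Function.Injective fun p : Fˣ × S => p.1 • p.2.1 := by
    rintro ⟨u, f, hf⟩ ⟨u', f', hf'⟩ h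
    obtain rfl : u = u' := Units.ext <| by
      simpa [Units.smul_def, cubic_smul_def, hf.1, hf'.1] using congrArg Cubic.a h
    obtain rfl : f = f' := smul_left_cancel u h
    rfl
  have hrange : {f : Cubic F | f.a ≠ 0 ∧ f.discr ≠ 0} =
      Set.range fun p : Fˣ × S => p.1 • p.2.1 := by
    ext f
    refine ⟨fun ⟨ha, hf⟩ => ?_, ?_⟩
    · let u := Units.mk0 f.a ha
      refine ⟨(u, ⟨u⁻¹ • f, inv_mul_cancel₀ ha, ?_⟩), smul_inv_smul u f⟩
      rw [Units.smul_def, discr_smul]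
      exact mul_ne_zero (pow_ne_zero 4 u⁻¹.ne_zero) hf
    · rintro ⟨⟨u, f, ha, hf⟩, rfl⟩
      dsimp only
      rw [Units.smul_def]
      refine ⟨mul_ne_zero u.ne_zero (ha ▸ one_ne_zero), ?_⟩
      rw [discr_smul]
      exact mul_ne_zero (pow_ne_zero 4 u.ne_zero) hf
  rw [hrange, Set.ncard_range_of_injective hinj, Nat.card_prod, Nat.card_units,
    Nat.card_coe_set_eq, ncard_a_eq_one_discr_ne_zero]

theorem ncard_a_eq_zero_discr_ne_zero [NeZero (2 : F)] :
    {f : Cubic F | f.a = 0 ∧ f.discr ≠ 0}.ncard =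
      (Nat.card F - 1) * (Nat.card F * (Nat.card F - 1)) := by
  -- On forms with `a = 0` the discriminant is `b² (c² - 4bd)`, so `b ≠ 0`, `c` and
  -- `c² - 4bd ≠ 0` serve as coordinates.
  let φ : Fˣ × F × Fˣ → Cubic F := fun p => ⟨0, p.1, p.2.1, (p.2.1 ^ 2 - p.2.2) / (4 * p.1)⟩
  have h4 : (4 : F) ≠ 0 := four_ne_zero_of_neZero_two
  have hinj : Function.Injective φ := by
    rintro ⟨b, c, e⟩ ⟨b', c', e'⟩ h
    obtain ⟨-, hb, rfl, he⟩ := Cubic.mk.inj h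
    obtain rfl : b = b' := Units.ext hb
    rw [div_left_inj' (mul_ne_zero h4 b.ne_zero), sub_right_inj, Units.val_inj] at he
    obtain rfl : e = e' := he
    rfl
  have hrange : {f : Cubic F | f.a = 0 ∧ f.discr ≠ 0} = Set.range φ := by
    ext f
    refine ⟨fun ⟨ha, hf⟩ => ?_, ?_⟩
    · have hdiscr : f.discr = f.b ^ 2 * (f.c ^ 2 - 4 * f.b * f.d) := by
        rw [Cubic.discr, ha]
        ring
      rw [hdiscr, mul_ne_zero_iff, pow_ne_zero_iff two_ne_zero] at hf
      refine ⟨(Units.mk0 _ hf.1, f.c, Units.mk0 _ hf.2), Cubic.ext ha.symm rfl rfl ?_⟩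
      simp only [φ, Units.val_mk0]
      have := hf.1
      field_simp
      ring
    · rintro ⟨⟨b, c, e⟩, rfl⟩
      have hdiscr : (φ (b, c, e)).discr = b ^ 2 * e := by
        simp only [φ, Cubic.discr]
        field_simp
        ring
      exact ⟨rfl, hdiscr ▸ mul_ne_zero (pow_ne_zero 2 b.ne_zero) e.ne_zero⟩
  rw [hrange, Set.ncard_range_of_injective hinj, Nat.card_prod, Nat.card_prod, Nat.card_units]

theorem ncard_discr_ne_zero [Finite F] [NeZero (2 : F)] :
    {f : Cubic F | f.discr ≠ 0}.ncard =
      Nat.card F * (Nat.card F - 1) * (Nat.card F ^ 2 - 1) := by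
  have hunion : {f : Cubic F | f.discr ≠ 0} =
      {f | f.a ≠ 0 ∧ f.discr ≠ 0} ∪ {f | f.a = 0 ∧ f.discr ≠ 0} := by
    ext f
    simp only [Set.mem_union, Set.mem_ofPred_eq]
    tauto
  rw [hunion, Set.ncard_union_eq, ncard_a_ne_zero_discr_ne_zero, ncard_a_eq_zero_discr_ne_zero]
  · obtain ⟨m, hm⟩ := Nat.exists_eq_add_of_le' (Nat.card_pos (α := F))
    have hcube : (m + 1) ^ 3 - (m + 1) ^ 2 = (m + 1) ^ 2 * m := Nat.sub_eq_of_eq_add (by ring)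
    have hsq : (m + 1) ^ 2 - 1 = (m + 2) * m := Nat.sub_eq_of_eq_add (by ring)
    rw [hm, hcube, hsq, Nat.add_sub_cancel]
    ring
  · exact Set.disjoint_left.2 fun f hf hf' => hf.1 hf'.1

end

/-! ### The count -/

section
variable {F : Type*} [Field F] [Finite F]

theorem nat_card_units_mul_nat_card_symPairs [NeZero (2 : F)] :
    Nat.card Fˣ * Nat.card {P : Matrix (Fin 3) (Fin 3) F × Matrix (Fin 3) (Fin 3) F //
        P.1.IsSymm ∧ P.2.IsSymm ∧ disc4 P.1 P.2 ≠ 0} =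
      {f : Cubic F | f.discr ≠ 0}.ncard * Nat.card (GL (Fin 3) F) := by
  let D : Set (Cubic F) := {f | f.discr ≠ 0}
  have := Fintype.ofFinite D
  have hsigma : Nat.card (Σ f : D, resolventFibre f.1) = D.ncard * Nat.card (GL (Fin 3) F) := by
    rw [Nat.card_sigma, Finset.sum_congr rfl fun f _ => nat_card_resolventFibre f.2,
      Finset.sum_const, Finset.card_univ, smul_eq_mul, ← Nat.card_eq_fintype_card,
      Nat.card_coe_set_eq]
  rw [← hsigma, ← Nat.card_prod]
  have hdiscr {l : Fˣ} {f : Cubic F} : (l • f).discr ≠ 0 ↔ f.discr ≠ 0 := by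
    rw [Units.smul_def, discr_smul, mul_ne_zero_iff_left (pow_ne_zero 4 l.ne_zero)]
  refine Nat.card_congr
    { toFun := fun y => ⟨⟨y.1⁻¹ • cubicResolvent y.2.1.1 y.2.1.2, hdiscr.2 ?_⟩,
        (y.1, y.2.1), y.2.2.1, y.2.2.2.1, (smul_inv_smul _ _).symm⟩
      invFun := fun z => (z.2.1.1, ⟨z.2.1.2, z.2.2.1, z.2.2.2.1, ?_⟩)
      left_inv := fun _ => rfl
      right_inv := ?_ }
  · rw [← disc4_eq_discr_cubicResolvent]
    exact y.2.2.2.2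
  · rw [disc4_eq_discr_cubicResolvent, z.2.2.2.2]
    exact hdiscr.2 z.1.2
  · rintro ⟨⟨f, hf⟩, ⟨⟨l, A, B⟩, hA, hB, h⟩⟩
    obtain rfl : f = l⁻¹ • cubicResolvent A B := eq_inv_smul_iff.2 h.symm
    rfl

theorem nat_card_GL_three :
    Nat.card (GL (Fin 3) F) =
      Nat.card F ^ 3 * (Nat.card F - 1) * (Nat.card F ^ 2 - 1) * (Nat.card F ^ 3 - 1) := by
  have := Fintype.ofFinite F
  rw [Matrix.card_GL_field, Fin.prod_univ_three, ← Nat.card_eq_fintype_card]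
  generalize Nat.card F = q
  have h₁ : q ^ 3 - q = q * (q ^ 2 - 1) := by rw [Nat.mul_sub, mul_one, pow_succ']
  have h₂ : q ^ 3 - q ^ 2 = q ^ 2 * (q - 1) := by rw [Nat.mul_sub, mul_one, pow_succ]
  simp only [Fin.val_zero, Fin.val_one, Fin.val_two, pow_zero, pow_one, h₁, h₂]
  ring

end

theorem card_symPairs_disc4_ne_zero_general (F : Type*) [Field F] [Fintype F] (q : ℕ)
    (hq : Fintype.card F = q) (hodd : Odd q) :
    Nat.card {P : Matrix (Fin 3) (Fin 3) F × Matrix (Fin 3) (Fin 3) F //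
        P.1.IsSymm ∧ P.2.IsSymm ∧ disc4 P.1 P.2 ≠ 0} =
      q ^ 4 * (q - 1) * (q ^ 2 - 1) ^ 2 * (q ^ 3 - 1) := by
  have : NeZero (2 : F) := ⟨Ring.two_ne_zero fun h =>
    Nat.not_even_iff_odd.2 hodd (hq ▸ Nat.even_iff.2 (FiniteField.even_card_iff_char_two.1 h))⟩
  obtain rfl : Nat.card F = q := Nat.card_eq_fintype_card.trans hq
  have h := nat_card_units_mul_nat_card_symPairs (F := F)
  rw [ncard_discr_ne_zero, nat_card_GL_three, Nat.card_units] at h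
  refine Nat.eq_of_mul_eq_mul_left (Nat.sub_pos_of_lt Finite.one_lt_card) (h.trans ?_)
  ring

/-- Over a finite field `F` of cardinality `q` coprime to `6`, the number of pairs `(A,B)`
of symmetric 3×3 matrices over `F` with `Δ₄(A,B) ≠ 0` is `q⁴(q−1)(q²−1)²(q³−1)`. -/
theorem card_symPairs_disc4_ne_zero (F : Type*) [Field F] [Fintype F] (q : ℕ)
    (hq : Fintype.card F = q) (hco : Nat.Coprime q 6) :
    Nat.card {P : Matrix (Fin 3) (Fin 3) F × Matrix (Fin 3) (Fin 3) F //
        P.1.IsSymm ∧ P.2.IsSymm ∧ disc4 P.1 P.2 ≠ 0} =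
      q ^ 4 * (q - 1) * (q ^ 2 - 1) ^ 2 * (q ^ 3 - 1) :=
  card_symPairs_disc4_ne_zero_general F q hq
    (Nat.coprime_two_right.1 (hco.coprime_dvd_right (by norm_num)))
end
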